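/- Let S be a finite Boolean inverse monoid. Then the map θ : S → K(A(S)) defined by θ(a) = {x ∈ A(S) : x ≤ a} is an isomorphism of Boolean inverse monoids; in particular, every finite Boolean inverse monoid is isomorphic to the Boolean inverse monoid of all local bisections of the finite discrete groupoid of its atoms under the restricted product. -/

import Mathlib

namespace Paper

/-- An inverse semigroup with zero: an associative multiplication, a zero that is
absorbing, and a map `⁻¹` sending each element to its unique generalized inverse. -/
class IsInverseSemigroup (S : Type*) [Mul S] [Zero S] [Inv S] : Prop where
  mul_assoc : ∀ a b c : S, a * b * c = a * (b * c)
  mul_inv_mul : ∀ a : S, a * a⁻¹ * a = a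
  inv_mul_inv : ∀ a : S, a⁻¹ * a * a⁻¹ = a⁻¹
  inv_unique : ∀ a b : S, a * b * a = a → b * a * b = b → b = a⁻¹
  zero_mul : ∀ a : S, 0 * a = 0
  mul_zero : ∀ a : S, a * 0 = 0

variable {S : Type*} [Mul S] [Zero S] [Inv S]

/-- The natural partial order: `a ≤ b` iff `a = b * a⁻¹ * a`. -/
def nle (a b : S) : Prop := a = b * a⁻¹ * a

/-- `e` is an idempotent. -/
def idem (e : S) : Prop := e * e = e

/-- `a` and `b` are compatible. -/
def compat (a b : S) : Prop := idem (a⁻¹ * b) ∧ idem (a * b⁻¹)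

/-- `a` and `b` are orthogonal. -/
def orth (a b : S) : Prop := a⁻¹ * b = 0 ∧ a * b⁻¹ = 0

/-- `j` is the least upper bound of `a` and `b` for the natural partial order. -/
def isJoin (a b j : S) : Prop :=
  nle a j ∧ nle b j ∧ ∀ c : S, nle a c → nle b c → nle j c

/-- `m` is the greatest lower bound of `a` and `b` for the natural partial order. -/
def isMeet (a b m : S) : Prop :=
  nle m a ∧ nle m b ∧ ∀ c : S, nle c a → nle c b → nle c m

/-- `a` is an atom: a nonzero element with nothing strictly between it and `0`. -/
def isAtomElem (a : S) : Prop := a ≠ 0 ∧ ∀ x : S, nle x a → x = a ∨ x = 0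

/-- `s` is the least upper bound of the finite family `f`. -/
def isJoinFin {m : ℕ} (f : Fin m → S) (s : S) : Prop :=
  (∀ i, nle (f i) s) ∧ ∀ c : S, (∀ i, nle (f i) c) → nle s c

/-- A Boolean inverse semigroup: a nonzero inverse semigroup with zero in which
compatible pairs have joins, multiplication distributes over binary compatible joins,
and the idempotents form a generalized Boolean algebra under the natural partial
order (meets of idempotents are automatically given by multiplication; the extra
requirement is the existence of relative complements). -/
class IsBooleanInverseSemigroup (S : Type*) [Mul S] [Zero S] [Inv S]
    extends IsInverseSemigroup S : Prop where
  exists_ne_zero : ∃ a : S, a ≠ 0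
  compat_join : ∀ a b : S, compat a b → ∃ j, isJoin a b j
  mul_join : ∀ a b j c : S, isJoin a b j → isJoin (c * a) (c * b) (c * j)
  join_mul : ∀ a b j c : S, isJoin a b j → isJoin (a * c) (b * c) (j * c)
  relcomp : ∀ e f : S, idem e → idem f → nle f e →
    ∃ g : S, idem g ∧ nle g e ∧ g * f = 0 ∧ isJoin f g e


/-- `A` is a local bisection of the groupoid of atoms of `S` (under the restricted
product): a set of atoms in which elements with equal domains are equal and
elements with equal ranges are equal. -/
def lbAtoms {S : Type*} [Mul S] [Zero S] [Inv S] (A : Set S) : Prop :=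
  (∀ x ∈ A, isAtomElem x) ∧
    ∀ x ∈ A, ∀ y ∈ A, (x⁻¹ * x = y⁻¹ * y → x = y) ∧ (x * x⁻¹ = y * y⁻¹ → x = y)

/-- The setwise product of subsets of `S` with respect to the restricted product:
`x · y` is included when `d(x) = r(y)`. -/
def restrictedSetMul {S : Type*} [Mul S] [Inv S] (A B : Set S) : Set S :=
  {z | ∃ x ∈ A, ∃ y ∈ B, x⁻¹ * x = y * y⁻¹ ∧ z = x * y}

/-- The map sending an element to the set of atoms below it. -/
def theta {S : Type*} [Mul S] [Zero S] [Inv S] (a : S) : Set S :=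
  {x | isAtomElem x ∧ nle x a}

section helpers

section inv
variable {S : Type*} [Mul S] [Zero S] [Inv S] [IsInverseSemigroup S]

theorem hs_ma (a b c : S) : a * b * c = a * (b * c) := IsInverseSemigroup.mul_assoc a b c
theorem hs_z (a : S) : 0 * a = 0 := IsInverseSemigroup.zero_mul a
theorem hs_zr (a : S) : a * 0 = 0 := IsInverseSemigroup.mul_zero a
theorem hs_mim (a : S) : a * (a⁻¹ * a) = a := by
  rw [← hs_ma]; exact IsInverseSemigroup.mul_inv_mul a
theorem hs_imi (a : S) : a⁻¹ * (a * a⁻¹) = a⁻¹ := by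
  rw [← hs_ma]; exact IsInverseSemigroup.inv_mul_inv a
theorem hs_mim' (a c : S) : a * (a⁻¹ * (a * c)) = a * c := by
  rw [← hs_ma a⁻¹, ← hs_ma, hs_mim]
theorem hs_imi' (a c : S) : a⁻¹ * (a * (a⁻¹ * c)) = a⁻¹ * c := by
  rw [← hs_ma a, ← hs_ma, hs_imi]
theorem hs_uniq (a b : S) (h : a * (b * a) = a) (h' : b * (a * b) = b) : b = a⁻¹ :=
  IsInverseSemigroup.inv_unique a b (by rw [hs_ma, h]) (by rw [hs_ma, h'])
theorem hs_ii (a : S) : a⁻¹⁻¹ = a := (hs_uniq _ _ (hs_imi a) (hs_mim a)).symm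
theorem hs_idinv {e : S} (h : idem e) : e⁻¹ = e := by
  unfold idem at h
  exact (hs_uniq _ _ (by rw [h, h]) (by rw [h, h])).symm
theorem hs_id' {e : S} (h : idem e) (c : S) : e * (e * c) = e * c := by
  rw [← hs_ma, h]

theorem hs_idmul {e f : S} (he : idem e) (hf : idem f) : idem (e * f) := by
  have h1 := hs_mim (e * f)
  have h2 := hs_imi (e * f)
  generalize hx : (e * f)⁻¹ = x at h1 h2
  simp only [hs_ma] at h1 h2
  have hxx : f * (x * e) = x := by
    rw [← hx]; rw [← hx] at h1 h2
    apply hs_uniq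
    · simp only [hs_ma, hs_id' he, hs_id' hf, h1]
    · simp only [hs_ma, hs_id' he, hs_id' hf]
      generalize (e * f)⁻¹ = x at h1 h2
      have : x * (e * (f * (x * e))) = x * e := by
        have := congrArg (· * e) h2
        simpa only [hs_ma] using this
      rw [this]
  have hix : idem x := by
    have h3 : x * (e * (f * (x * e))) = x * e := by
      have := congrArg (· * e) h2
      simpa only [hs_ma] using this
    unfold idem
    calc x * x = (f * (x * e)) * (f * (x * e)) := by rw [hxx]
      _ = f * (x * e) := by simp only [hs_ma, h3]
      _ = x := hxx
  have : e * f = x := by rw [← hs_ii (e * f), hx, hs_idinv hix]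
  rw [this]; exact hix

theorem hs_comm {e f : S} (he : idem e) (hf : idem f) : e * f = f * e := by
  have h1 : e * (f * (e * f)) = e * f := by rw [← hs_ma]; exact hs_idmul he hf
  have h2 : f * (e * (f * e)) = f * e := by rw [← hs_ma]; exact hs_idmul hf he
  have h3 : f * e = (e * f)⁻¹ := by
    apply hs_uniq <;> simp only [hs_ma, hs_id' he, hs_id' hf, h1, h2]
  rw [h3, hs_idinv (hs_idmul he hf)]

theorem hs_d (a : S) : idem (a⁻¹ * a) := by unfold idem; simp only [hs_ma, hs_mim]
theorem hs_r (a : S) : idem (a * a⁻¹) := by unfold idem; simp only [hs_ma, hs_imi]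
theorem hs_idz : idem (0 : S) := hs_z 0

theorem hs_minv (a b : S) : (a * b)⁻¹ = b⁻¹ * a⁻¹ := by
  have h := hs_comm (hs_r b) (hs_d a)
  symm
  apply hs_uniq
  · calc a * b * (b⁻¹ * a⁻¹ * (a * b)) = a * ((b * b⁻¹) * (a⁻¹ * a)) * b := by simp only [hs_ma]
      _ = a * b := by rw [h]; simp only [hs_ma, hs_mim']; rw [hs_mim]
  · calc b⁻¹ * a⁻¹ * (a * b * (b⁻¹ * a⁻¹)) = b⁻¹ * ((a⁻¹ * a) * (b * b⁻¹)) * a⁻¹ := by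
          simp only [hs_ma]
      _ = b⁻¹ * a⁻¹ := by rw [← h]; simp only [hs_ma, hs_imi']; rw [hs_imi]

theorem hs_le_of {a b e : S} (he : idem e) (h : a = b * e) : nle a b := by
  have h1 : a * e = a := by rw [h, hs_ma, he]
  unfold nle
  have h2 := hs_comm he (hs_d a)
  calc a = a * (a⁻¹ * a) := (hs_mim a).symm
    _ = b * (e * (a⁻¹ * a)) := by rw [← hs_ma b, ← h]
    _ = b * (a⁻¹ * (a * e)) := by rw [h2, hs_ma]
    _ = b * a⁻¹ * a := by rw [h1, hs_ma]

theorem hs_conj (b : S) {e : S} (he : idem e) : idem (b * (e * b⁻¹)) := by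
  have h := hs_comm he (hs_d b)
  unfold idem
  calc b * (e * b⁻¹) * (b * (e * b⁻¹)) = b * ((e * (b⁻¹ * b)) * (e * b⁻¹)) := by
        simp only [hs_ma]
    _ = b * (e * b⁻¹) := by rw [h]; simp only [hs_ma, hs_id' he, hs_mim']

theorem hs_le_r {a b : S} (h : nle a b) : a = b * (a⁻¹ * a) := by
  unfold nle at h; rw [← hs_ma]; exact h

theorem hs_le_of' {a b e : S} (he : idem e) (h : a = e * b) : nle a b := by
  have h1 := hs_conj b⁻¹ he
  rw [hs_ii] at h1
  refine hs_le_of h1 ?_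
  have h' := hs_comm (hs_r b) he
  calc a = e * (b * b⁻¹) * b := by simp only [hs_ma, hs_mim]; exact h
    _ = _ := by rw [← h']; simp only [hs_ma]

theorem hs_le_inv {a b : S} (h : nle a b) : nle a⁻¹ b⁻¹ := by
  have h1 : a⁻¹ = (b * (a⁻¹ * a))⁻¹ := congrArg (·⁻¹) (hs_le_r h)
  rw [hs_minv, hs_idinv (hs_d a)] at h1
  exact hs_le_of' (hs_d a) h1

theorem hs_le_l {a b : S} (h : nle a b) : a = a * a⁻¹ * b := by
  have h1 := congrArg (·⁻¹) (hs_le_r (hs_le_inv h))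
  simp only [hs_minv, hs_ii] at h1
  exact h1

theorem hs_refl (a : S) : nle a a := hs_le_of (hs_d a) (hs_mim a).symm
theorem hs_trans {a b c : S} (h : nle a b) (h' : nle b c) : nle a c := by
  refine hs_le_of (hs_idmul (hs_d b) (hs_d a)) ?_
  rw [← hs_ma, ← hs_le_r h', ← hs_le_r h]
theorem hs_antisymm {a b : S} (h : nle a b) (h' : nle b a) : a = b := by
  have h1 := hs_le_r h
  have h2 := hs_le_r h'
  rw [h1]
  have h3 : b * (a⁻¹ * a) = a * (a⁻¹ * a) * (b⁻¹ * b) := by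
    conv_lhs => rw [h2]
    rw [hs_ma a, hs_ma a, hs_comm (hs_d b) (hs_d a)]
  rw [h3, hs_mim, ← h2]
theorem hs_mull {a b : S} (c : S) (h : nle a b) : nle (c * a) (c * b) := by
  refine hs_le_of (hs_d a) ?_
  rw [hs_ma, ← hs_le_r h]
theorem hs_mulr {a b : S} (c : S) (h : nle a b) : nle (a * c) (b * c) := by
  refine hs_le_of' (hs_r a) ?_
  rw [← hs_ma, ← hs_le_l h]
theorem hs_zle (a : S) : nle 0 a := hs_le_of hs_idz (hs_zr a).symm
theorem hs_lez {a : S} (h : nle a 0) : a = 0 := hs_antisymm h (hs_zle a)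
theorem hs_leid {a e : S} (he : idem e) (h : nle a e) : idem a := by
  rw [hs_le_r h]; exact hs_idmul he (hs_d a)
theorem hs_idle {a e : S} (he : idem e) (h : nle a e) : e * a = a := by
  have := hs_le_r h
  rw [this, hs_id' he]
theorem hs_idle' {a e : S} (he : idem e) (h : nle a e) : a * e = a := by
  rw [hs_comm (hs_leid he h) he, hs_idle he h]
theorem hs_zinv : (0 : S)⁻¹ = 0 := hs_idinv hs_idz

theorem hs_atom_inv {z : S} (h : isAtomElem z) : isAtomElem z⁻¹ := by
  refine ⟨fun h0 => h.1 ?_, fun x hx => ?_⟩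
  · rw [← hs_ii z, h0, hs_zinv]
  · have := hs_le_inv hx
    rw [hs_ii] at this
    rcases h.2 _ this with h1 | h1
    · left; rw [← h1, hs_ii]
    · right; rw [← hs_ii x, h1, hs_zinv]

theorem hs_atom_l {z c : S} (h : isAtomElem z) (hc : c⁻¹ * (c * z) = z) :
    isAtomElem (c * z) := by
  refine ⟨fun h0 => h.1 ?_, fun x hx => ?_⟩
  · rw [← hc, h0, hs_zr]
  · have h1 := hs_mull c⁻¹ hx
    rw [hc] at h1
    have h2 : c * (c⁻¹ * x) = x := by
      rw [hs_le_r hx]; simp only [hs_ma, hs_mim']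
    rcases h.2 _ h1 with h3 | h3
    · left; rw [← h2, h3]
    · right; rw [← h2, h3, hs_zr]

theorem hs_atom_r {z c : S} (h : isAtomElem z) (hc : z * c * c⁻¹ = z) :
    isAtomElem (z * c) := by
  have h1 : isAtomElem (c⁻¹ * z⁻¹) := by
    refine hs_atom_l (hs_atom_inv h) ?_
    have := congrArg (·⁻¹) hc
    simpa only [hs_minv] using this
  have := hs_atom_inv h1
  rwa [hs_minv, hs_ii, hs_ii] at this

theorem hs_atom_rr {z : S} (h : isAtomElem z) : isAtomElem (z * z⁻¹) :=
  hs_atom_r h (by rw [hs_ii, hs_ma, hs_mim])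
theorem hs_atom_dd {z : S} (h : isAtomElem z) : isAtomElem (z⁻¹ * z) := by
  have := hs_atom_rr (hs_atom_inv h)
  rwa [hs_ii] at this

theorem hs_atom_orth {e f : S} (he : idem e) (hf : idem f) (ae : isAtomElem e)
    (af : isAtomElem f) (hne : e ≠ f) : e * f = 0 := by
  by_contra h
  have h1 := (ae.2 _ (hs_le_of hf rfl)).resolve_right h
  have h2 := (af.2 _ (hs_le_of' he rfl)).resolve_right h
  exact hne (h1.symm.trans h2)

theorem hs_theta_lb (a : S) : lbAtoms (theta a) := by
  refine ⟨fun x hx => hx.1, fun x hx y hy => ⟨fun h => ?_, fun h => ?_⟩⟩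
  · rw [hs_le_r hx.2, hs_le_r hy.2, h]
  · rw [hs_le_l hx.2, hs_le_l hy.2, h]

theorem hs_theta_zero : theta (0 : S) = ∅ := by
  ext x
  simp only [theta, Set.mem_ofPred_eq, Set.mem_empty_iff_false, iff_false]
  rintro ⟨h, h'⟩
  exact h.1 (hs_lez h')

theorem hs_theta_mul (a b : S) :
    theta (a * b) = restrictedSetMul (theta a) (theta b) := by
  ext z
  constructor
  · rintro ⟨hz, hle⟩
    have h1 : a * (a⁻¹ * z) = z := by
      rw [hs_le_r hle]; simp only [hs_ma, hs_mim']
    refine ⟨z * z⁻¹ * a, ⟨?_, hs_le_of' (hs_r z) rfl⟩, a⁻¹ * z, ⟨?_, ?_⟩, ?_, ?_⟩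
    · refine hs_atom_r (hs_atom_rr hz) ?_
      rw [hs_ma, hs_comm (hs_r z) (hs_r a)]
      rw [← hs_ma, hs_ma a, h1]
    · exact hs_atom_l hz (by rw [hs_ii, h1])
    · have h2 := hs_mull a⁻¹ hle
      rw [← hs_ma] at h2
      exact hs_trans h2 (hs_le_of' (hs_d a) rfl)
    · simp only [hs_minv, hs_ii, hs_ma, hs_imi', hs_mim']
    · rw [hs_ma, h1, hs_ma, hs_mim]
  · rintro ⟨x, hx, y, hy, h, rfl⟩
    refine ⟨hs_atom_l hy.1 ?_, hs_trans (hs_mulr y hx.2) (hs_mull a hy.2)⟩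
    rw [← hs_ma, h, hs_ma, hs_mim]

theorem hs_exists_max [Finite S] (P : S → Prop) (x : S) (hx : P x) :
    ∃ m, P m ∧ ∀ y, P y → nle m y → y = m := by
  let _ : PartialOrder S :=
    { le := nle, le_refl := hs_refl, le_trans := fun _ _ _ => hs_trans,
      le_antisymm := fun _ _ => hs_antisymm }
  obtain ⟨m, hm⟩ := (Set.toFinite {x | P x}).exists_maximal ⟨x, hx⟩
  exact ⟨m, hm.1, fun y hy hmy => hs_antisymm (hm.2 hy hmy) hmy⟩

theorem hs_exists_min [Finite S] (P : S → Prop) (x : S) (hx : P x) :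
    ∃ m, P m ∧ ∀ y, P y → nle y m → y = m := by
  let _ : PartialOrder S :=
    { le := nle, le_refl := hs_refl, le_trans := fun _ _ _ => hs_trans,
      le_antisymm := fun _ _ => hs_antisymm }
  obtain ⟨m, hm⟩ := (Set.toFinite {x | P x}).exists_minimal ⟨x, hx⟩
  exact ⟨m, hm.1, fun y hy hmy => hs_antisymm hmy (hm.2 hy hmy)⟩

theorem hs_exists_atom [Finite S] {a : S} (ha : a ≠ 0) : ∃ x, isAtomElem x ∧ nle x a := by
  obtain ⟨m, hm, hmin⟩ := hs_exists_min (fun x : S => x ≠ 0 ∧ nle x a) a ⟨ha, hs_refl a⟩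
  refine ⟨m, ⟨hm.1, fun x hx => ?_⟩, hm.2⟩
  by_cases h : x = 0
  · exact Or.inr h
  · exact Or.inl (hmin x ⟨h, hs_trans hx hm.2⟩ hx)

end inv

section bool
variable {S : Type*} [Mul S] [Zero S] [Inv S] [IsBooleanInverseSemigroup S]

theorem hs_theta_join {a b j : S} (h : isJoin a b j) : theta j = theta a ∪ theta b := by
  ext z
  constructor
  · rintro ⟨hz, hle⟩
    have h1 := IsBooleanInverseSemigroup.mul_join a b j (z * z⁻¹) h
    rw [← hs_le_l hle] at h1
    rcases hz.2 _ h1.1 with h2 | h2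
    · exact Or.inl ⟨hz, hs_le_of' (hs_r z) h2.symm⟩
    rcases hz.2 _ h1.2.1 with h3 | h3
    · exact Or.inr ⟨hz, hs_le_of' (hs_r z) h3.symm⟩
    have h4 := h1.2.2 0
    rw [h2, h3] at h4
    exact absurd (hs_lez (h4 (hs_refl 0) (hs_refl 0))) hz.1
  · rintro (⟨hz, hle⟩ | ⟨hz, hle⟩)
    · exact ⟨hz, hs_trans hle h.1⟩
    · exact ⟨hz, hs_trans hle h.2.1⟩

theorem hs_le_of_theta [Finite S] {a b : S} (h : theta a ⊆ theta b) : nle a b := by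
  obtain ⟨f, ⟨hf, hfe, hfb⟩, hmax⟩ := hs_exists_max
    (fun f : S => idem f ∧ nle f (a⁻¹ * a) ∧ nle (a * f) b) 0
    ⟨hs_idz, hs_zle _, by rw [hs_zr]; exact hs_zle _⟩
  obtain ⟨g, hg, hge, hgf, hj⟩ := IsBooleanInverseSemigroup.relcomp _ f (hs_d a) hf hfe
  by_cases g0 : g = 0
  · have h1 := hs_antisymm (hj.2.2 f (hs_refl f) (by rw [g0]; exact hs_zle f)) hfe
    rwa [← h1, hs_mim] at hfb
  · exfalso
    obtain ⟨x, hx, hxg⟩ := hs_exists_atom g0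
    have hxi := hs_leid hg hxg
    have hxe := hs_trans hxg hge
    have h1 : a⁻¹ * (a * x) = x := by rw [← hs_ma]; exact hs_idle (hs_d a) hxe
    have h2 : nle (a * x) b := (h ⟨hs_atom_l hx h1, hs_le_of hxi rfl⟩).2
    have hc : compat f x := by
      unfold compat
      rw [hs_idinv hf, hs_idinv hxi]
      exact ⟨hs_idmul hf hxi, hs_idmul hf hxi⟩
    obtain ⟨k, hk⟩ := IsBooleanInverseSemigroup.compat_join _ _ hc
    have hke := hk.2.2 _ hfe hxe
    have hkb := (IsBooleanInverseSemigroup.mul_join _ _ _ a hk).2.2 _ hfb h2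
    have h3 := hmax k ⟨hs_leid (hs_d a) hke, hke, hkb⟩ hk.1
    have h4 : nle x f := h3 ▸ hk.2.1
    apply hx.1
    have h5 := hs_idle' hf h4
    rw [← hs_idle' hg hxg, hs_ma, hgf, hs_zr] at h5
    rw [← hs_idle' hg hxg, ← h5]

theorem hs_join_zero {j : S} (h : isJoin 0 0 j) : j = 0 :=
  hs_lez (h.2.2 0 (hs_refl 0) (hs_refl 0))

theorem hs_surj [Finite S] (A : Set S) (hA : lbAtoms A) : ∃ a : S, theta a = A := by
  have key : ∀ T : Set S, T.Finite → T ⊆ A → ∃ j : S, theta j = T ∧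
      ∀ y ∈ A, y ∉ T → j⁻¹ * y = 0 ∧ j * y⁻¹ = 0 := by
    intro T hT
    induction T, hT using Set.Finite.induction_on with
    | empty =>
      intro _
      exact ⟨0, hs_theta_zero, fun y _ _ => ⟨by rw [hs_zinv, hs_z], hs_z _⟩⟩
    | @insert x T hxT _ ih =>
      intro hs
      obtain ⟨j, hj, ho⟩ := ih (fun y hy => hs (Set.mem_insert_of_mem _ hy))
      have hxA : x ∈ A := hs (Set.mem_insert _ _)
      obtain ⟨h1, h2⟩ := ho x hxA hxT
      have hc : compat j x := by
        unfold compat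
        rw [h1, h2]; exact ⟨hs_idz, hs_idz⟩
      obtain ⟨k, hk⟩ := IsBooleanInverseSemigroup.compat_join _ _ hc
      refine ⟨k, ?_, ?_⟩
      · rw [hs_theta_join hk, hj]
        ext z
        simp only [Set.mem_union, Set.mem_insert_iff]
        constructor
        · rintro (h | h)
          · exact Or.inr h
          · exact Or.inl (((hA.1 x hxA).2 z h.2).resolve_right h.1.1)
        · rintro (rfl | h)
          · exact Or.inr ⟨hA.1 z hxA, hs_refl z⟩
          · exact Or.inl h
      · intro y hy hyT
        simp only [Set.mem_insert_iff, not_or] at hyT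
        obtain ⟨h3, h4⟩ := ho y hy hyT.2
        have hd : x⁻¹ * x ≠ y⁻¹ * y := fun h => hyT.1 ((hA.2 x hxA y hy).1 h).symm
        have hr : y * y⁻¹ ≠ x * x⁻¹ := fun h => hyT.1 ((hA.2 x hxA y hy).2 h.symm).symm
        have h5 : x * y⁻¹ = 0 := by
          have := hs_atom_orth (hs_d x) (hs_d y) (hs_atom_dd (hA.1 x hxA))
            (hs_atom_dd (hA.1 y hy)) hd
          calc x * y⁻¹ = x * ((x⁻¹ * x) * (y⁻¹ * y)) * y⁻¹ := by
                simp only [hs_ma, hs_mim', hs_imi]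
            _ = 0 := by rw [this, hs_zr, hs_z]
        have h6 : y⁻¹ * x = 0 := by
          have := hs_atom_orth (hs_r y) (hs_r x) (hs_atom_rr (hA.1 y hy))
            (hs_atom_rr (hA.1 x hxA)) hr
          calc y⁻¹ * x = y⁻¹ * ((y * y⁻¹) * (x * x⁻¹)) * x := by
                simp only [hs_ma, hs_imi', hs_mim]
            _ = 0 := by rw [this, hs_zr, hs_z]
        have h7 : y⁻¹ * j = 0 := by
          rw [← hs_ii (y⁻¹ * j), hs_minv, hs_ii, h3, hs_zinv]
        have h8 := IsBooleanInverseSemigroup.mul_join _ _ _ y⁻¹ hk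
        have h9 := IsBooleanInverseSemigroup.join_mul _ _ _ y⁻¹ hk
        rw [h7, h6] at h8
        rw [h4, h5] at h9
        refine ⟨?_, hs_join_zero h9⟩
        rw [← hs_ii (k⁻¹ * y), hs_minv, hs_ii, hs_join_zero h8, hs_zinv]
  obtain ⟨j, hj, _⟩ := key A (Set.toFinite A) (fun _ h => h)
  exact ⟨j, hj⟩

end bool
end helpers

/-- For a finite Boolean inverse monoid `S`, the map `θ : S → K(A(S))`,
`θ(a) = {atoms x : x ≤ a}`, is an isomorphism onto the Boolean inverse monoid of
all local bisections of the groupoid of atoms of `S` under the restricted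
product: it takes values in local bisections, is injective, is surjective onto the
local bisections, and turns multiplication into the setwise restricted product. -/
theorem finite_boolean_inverse_monoid_iso_Kfin_atoms (S : Type*)
    [Mul S] [Zero S] [Inv S] [One S] [IsBooleanInverseSemigroup S] [Finite S]
    (hone : ∀ a : S, 1 * a = a ∧ a * 1 = a) :
    (∀ a : S, lbAtoms (theta a)) ∧
    (∀ a b : S, theta a = theta b → a = b) ∧
    (∀ A : Set S, lbAtoms A → ∃ a : S, theta a = A) ∧
    (∀ a b : S, theta (a * b) = restrictedSetMul (theta a) (theta b)) := by
  exact ⟨hs_theta_lb, fun a b h => hs_antisymm (hs_le_of_theta h.subset)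
    (hs_le_of_theta h.superset), hs_surj, hs_theta_mul⟩

end Paper
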